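/- arXiv:math/0007154 — 4 statements merged into one kernel-verified Lean document; each statement's English description precedes it below -/
import Mathlib

section
/- Let A be a finite-dimensional Hopf algebra over an algebraically closed field k of characteristic different from 2, let R be a triangular structure on A, and suppose the Drinfeld element u of (A,R) is central, grouplike, and satisfies u² = 1. Set R_u := (1/2)(1⊗1 + 1⊗u + u⊗1 − u⊗u) and R̃ := R·R_u. Then R̃ is a triangular structure on A and the Drinfeld element of (A,R̃) equals 1. -/
open TensorProduct

section Defs
variable (k A : Type*) [CommRing k] [Ring A] [HopfAlgebra k A]

/-- The map sending `R ∈ A⊗A` to `R₁₃ ∈ A⊗A⊗A`. -/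
noncomputable def R13map : A ⊗[k] A →ₗ[k] A ⊗[k] (A ⊗[k] A) :=
  TensorProduct.map LinearMap.id (TensorProduct.mk k A A 1)

/-- The map sending `R ∈ A⊗A` to `R₁₂ ∈ A⊗A⊗A`. -/
noncomputable def R12map : A ⊗[k] A →ₗ[k] A ⊗[k] (A ⊗[k] A) :=
  TensorProduct.map LinearMap.id ((TensorProduct.mk k A A).flip 1)

/-- `R` is a quasitriangular structure on the Hopf algebra `A`: `R` is invertible,
`(Δ⊗id)(R) = R₁₃R₂₃`, `(id⊗Δ)(R) = R₁₃R₁₂` and `τ(Δ(a))·R = R·Δ(a)` for all `a`. -/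
noncomputable def IsQuasitriangular (R : A ⊗[k] A) : Prop :=
  IsUnit R ∧
  (TensorProduct.assoc k A A A) ((LinearMap.rTensor A (Coalgebra.comul (R := k))) R)
      = R13map k A R * ((1 : A) ⊗ₜ R) ∧
  (LinearMap.lTensor A (Coalgebra.comul (R := k))) R = R13map k A R * R12map k A R ∧
  ∀ a : A, (TensorProduct.comm k A A) (Coalgebra.comul (R := k) a) * R
      = R * Coalgebra.comul (R := k) a

/-- `R` is a triangular structure on the Hopf algebra `A`: it is quasitriangular
and `R·τ(R) = 1⊗1`. -/
noncomputable def IsTriangular (R : A ⊗[k] A) : Prop :=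
  IsQuasitriangular k A R ∧ R * (TensorProduct.comm k A A) R = 1

/-- The Drinfeld element `u = μ∘(S⊗id)(τ(R))` of a quasitriangular Hopf algebra. -/
noncomputable def drinfeld (R : A ⊗[k] A) : A :=
  LinearMap.mul' k A
    ((TensorProduct.map (HopfAlgebra.antipode (R := k)) LinearMap.id)
      ((TensorProduct.comm k A A) R))

end Defs

/-- The element `R_u = ½(1⊗1 + 1⊗u + u⊗1 − u⊗u)`. -/
noncomputable def Ru (k A : Type*) [Field k] [Ring A] [HopfAlgebra k A]
    (u : A) : A ⊗[k] A :=
  (2 : k)⁻¹ • ((1 : A ⊗[k] A) + 1 ⊗ₜ u + u ⊗ₜ 1 - u ⊗ₜ u)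

section Multiplicativity

variable {k A : Type*} [CommRing k] [Ring A] [HopfAlgebra k A]

theorem comm_mul (x y : A ⊗[k] A) :
    TensorProduct.comm k A A (x * y) =
      TensorProduct.comm k A A x * TensorProduct.comm k A A y :=
  map_mul (Algebra.TensorProduct.comm k A A) x y

theorem R13map_mul (x y : A ⊗[k] A) :
    R13map k A (x * y) = R13map k A x * R13map k A y :=
  map_mul (Algebra.TensorProduct.map (AlgHom.id k A)
    (Algebra.TensorProduct.includeRight : A →ₐ[k] A ⊗[k] A)) x y

theorem R12map_mul (x y : A ⊗[k] A) :
    R12map k A (x * y) = R12map k A x * R12map k A y :=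
  map_mul (Algebra.TensorProduct.map (AlgHom.id k A)
    (Algebra.TensorProduct.includeLeft : A →ₐ[k] A ⊗[k] A)) x y

theorem lTensor_comul_mul (x y : A ⊗[k] A) :
    (Coalgebra.comul (R := k)).lTensor A (x * y) =
      (Coalgebra.comul (R := k)).lTensor A x * (Coalgebra.comul (R := k)).lTensor A y :=
  map_mul (Algebra.TensorProduct.map (AlgHom.id k A) (Bialgebra.comulAlgHom k A)) x y

theorem assoc_rTensor_comul_mul (x y : A ⊗[k] A) :
    TensorProduct.assoc k A A A ((Coalgebra.comul (R := k)).rTensor A (x * y)) =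
      TensorProduct.assoc k A A A ((Coalgebra.comul (R := k)).rTensor A x) *
        TensorProduct.assoc k A A A ((Coalgebra.comul (R := k)).rTensor A y) :=
  map_mul ((Algebra.TensorProduct.assoc k k k A A A).toAlgHom.comp
    (Algebra.TensorProduct.map (Bialgebra.comulAlgHom k A) (AlgHom.id k A))) x y

/-- Multiplying `R` on the right by a pure tensor. -/
theorem drinfeld_mul_tmul (R : A ⊗[k] A) (x y : A) :
    drinfeld k A (R * x ⊗ₜ y) = HopfAlgebra.antipode k y * drinfeld k A R * x := by
  induction R with
  | zero => simp [drinfeld]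
  | tmul a b => simp [drinfeld, HopfAlgebra.antipode_mul_antidistrib, mul_assoc]
  | add R T hR hT =>
    simp only [drinfeld, map_add, add_mul, mul_add] at hR hT ⊢
    rw [hR, hT]

end Multiplicativity

section Ru

variable {k A : Type*} [Field k] [Ring A] [HopfAlgebra k A] {u : A}

theorem comm_Ru : TensorProduct.comm k A A (Ru k A u) = Ru k A u := by
  simp only [Ru, map_smul, map_sub, map_add, TensorProduct.comm_tmul,
    Algebra.TensorProduct.one_def]
  abel_nf

theorem Ru_central (hu : ∀ a, u * a = a * u) (x : A ⊗[k] A) :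
    Ru k A u * x = x * Ru k A u := by
  induction x with
  | zero => simp
  | tmul a b => simp [Ru, add_mul, mul_add, sub_mul, mul_sub, hu]
  | add x y hx hy => rw [add_mul, mul_add, hx, hy]

theorem Ru_mul_self (h2 : (2 : k) ≠ 0) (hu : u * u = 1) : Ru k A u * Ru k A u = 1 := by
  simp only [Ru, smul_mul_smul_comm, Algebra.TensorProduct.one_def, add_mul, mul_add, sub_mul,
    mul_sub, Algebra.TensorProduct.tmul_mul_tmul, one_mul, mul_one, hu]
  rw [← mul_inv, inv_smul_eq_iff₀ (mul_ne_zero h2 h2)]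
  module

theorem assoc_rTensor_comul_Ru (h2 : (2 : k) ≠ 0) (hu : u * u = 1)
    (hgl : Coalgebra.comul (R := k) u = u ⊗ₜ u) :
    TensorProduct.assoc k A A A ((Coalgebra.comul (R := k)).rTensor A (Ru k A u)) =
      R13map k A (Ru k A u) * ((1 : A) ⊗ₜ Ru k A u) := by
  simp only [Ru, R13map, map_smul, map_sub, map_add, Algebra.TensorProduct.one_def,
    LinearMap.rTensor_tmul, TensorProduct.map_tmul, TensorProduct.mk_apply, LinearMap.id_apply,
    Bialgebra.comul_one, hgl, TensorProduct.assoc_tmul, TensorProduct.tmul_smul,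
    TensorProduct.tmul_add, TensorProduct.tmul_sub, smul_mul_smul_comm, add_mul, mul_add, sub_mul,
    mul_sub, Algebra.TensorProduct.tmul_mul_tmul, one_mul, mul_one, hu]
  rw [← mul_inv, eq_inv_smul_iff₀ (mul_ne_zero h2 h2), smul_smul, mul_assoc, mul_inv_cancel₀ h2]
  module

theorem lTensor_comul_Ru (h2 : (2 : k) ≠ 0) (hu : u * u = 1)
    (hgl : Coalgebra.comul (R := k) u = u ⊗ₜ u) :
    (Coalgebra.comul (R := k)).lTensor A (Ru k A u) =
      R13map k A (Ru k A u) * R12map k A (Ru k A u) := by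
  simp only [Ru, R13map, R12map, map_smul, map_sub, map_add, Algebra.TensorProduct.one_def,
    LinearMap.lTensor_tmul, TensorProduct.map_tmul, TensorProduct.mk_apply, LinearMap.id_apply,
    LinearMap.flip_apply, Bialgebra.comul_one, hgl, smul_mul_smul_comm, add_mul, mul_add, sub_mul,
    mul_sub, Algebra.TensorProduct.tmul_mul_tmul, one_mul, mul_one, hu]
  rw [← mul_inv, eq_inv_smul_iff₀ (mul_ne_zero h2 h2), smul_smul, mul_assoc, mul_inv_cancel₀ h2]
  module

theorem R13map_Ru_central (hu : ∀ a, u * a = a * u) (x : A ⊗[k] (A ⊗[k] A)) :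
    R13map k A (Ru k A u) * x = x * R13map k A (Ru k A u) := by
  induction x with
  | zero => simp
  | tmul a y =>
    induction y with
    | zero => simp
    | tmul b c =>
      simp only [Ru, R13map, map_smul, map_sub, map_add, Algebra.TensorProduct.one_def,
        TensorProduct.map_tmul, TensorProduct.mk_apply, LinearMap.id_apply]
      rw [smul_mul_assoc, mul_smul_comm]
      simp only [add_mul, mul_add, sub_mul, mul_sub, Algebra.TensorProduct.tmul_mul_tmul,
        one_mul, mul_one, hu]
    | add y z hy hz => rw [TensorProduct.tmul_add, add_mul, mul_add, hy, hz]
  | add x y hx hy => rw [add_mul, mul_add, hx, hy]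

theorem antipode_eq_self_of_comul_eq (hne : u ≠ 0) (hu : u * u = 1)
    (hgl : Coalgebra.comul (R := k) u = u ⊗ₜ u) : HopfAlgebra.antipode k u = u := by
  have hε : Coalgebra.counit (R := k) u = 1 := by
    have h := Coalgebra.rTensor_counit_comul (R := k) u
    have h' := congrArg (TensorProduct.lid k A) h
    rw [hgl] at h'
    simp only [LinearMap.rTensor_tmul, TensorProduct.lid_tmul, one_smul] at h'
    exact smul_left_injective k hne (by simpa using h')
  have h := HopfAlgebra.mul_antipode_rTensor_comul_apply (R := k) u
  rw [hgl, hε] at h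
  simp only [LinearMap.rTensor_tmul, LinearMap.mul'_apply, map_one] at h
  exact left_inv_eq_right_inv h hu

/-- Twisting by `R_u` multiplies the Drinfeld element by `u`. -/
theorem drinfeld_mul_Ru (h2 : (2 : k) ≠ 0) (hcent : ∀ a, u * a = a * u) (hne : u ≠ 0)
    (hu : u * u = 1) (hgl : Coalgebra.comul (R := k) u = u ⊗ₜ u) (R : A ⊗[k] A) :
    drinfeld k A (R * Ru k A u) = u * drinfeld k A R := by
  have hadd (x y : A ⊗[k] A) : drinfeld k A (x + y) = drinfeld k A x + drinfeld k A y := by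
    simp [drinfeld]
  have hsub (x y : A ⊗[k] A) : drinfeld k A (x - y) = drinfeld k A x - drinfeld k A y := by
    simp [drinfeld]
  have hsmul (c : k) (x : A ⊗[k] A) : drinfeld k A (c • x) = c • drinfeld k A x := by
    simp [drinfeld]
  rw [Ru, mul_smul_comm, hsmul, inv_smul_eq_iff₀ h2]
  simp only [mul_sub, mul_add, mul_one, hsub, hadd, drinfeld_mul_tmul,
    antipode_eq_self_of_comul_eq hne hu hgl, HopfAlgebra.antipode_one, one_mul]
  rw [mul_assoc u, ← hcent, ← mul_assoc, hu, one_mul]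
  module

end Ru

/-- Lemma 2.1.3: if `(A,R)` is triangular over an algebraically closed
field of characteristic `≠ 2` and its Drinfeld element `u` is central, grouplike and satisfies
`u² = 1`, then `R̃ = R·R_u` is again a triangular structure, with Drinfeld element `1`. -/
theorem mul_Ru_isTriangular_drinfeld_eq_one
    (k A : Type*) [Field k] [IsAlgClosed k] [Ring A] [HopfAlgebra k A]
    [FiniteDimensional k A] (h2 : (2 : k) ≠ 0)
    (R : A ⊗[k] A) (hR : IsTriangular k A R)
    (hcent : ∀ a : A, drinfeld k A R * a = a * drinfeld k A R)
    (hne : drinfeld k A R ≠ 0)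
    (hgl : Coalgebra.comul (R := k) (drinfeld k A R) = drinfeld k A R ⊗ₜ drinfeld k A R)
    (husq : drinfeld k A R * drinfeld k A R = 1) :
    IsTriangular k A (R * Ru k A (drinfeld k A R)) ∧
    drinfeld k A (R * Ru k A (drinfeld k A R)) = 1 := by
  set u := drinfeld k A R
  obtain ⟨⟨hunit, hΔl, hΔr, hcomm⟩, htri⟩ := hR
  have hRu := Ru_mul_self h2 husq
  refine ⟨⟨⟨hunit.mul ⟨⟨_, _, hRu, hRu⟩, rfl⟩, ?_, ?_, fun a => ?_⟩, ?_⟩, ?_⟩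
  · have h1 : (1 : A) ⊗ₜ[k] (R * Ru k A u) = (1 ⊗ₜ R) * (1 ⊗ₜ Ru k A u) := by simp
    rw [assoc_rTensor_comul_mul, hΔl, assoc_rTensor_comul_Ru h2 husq hgl, R13map_mul, h1,
      mul_assoc, ← mul_assoc ((1 : A) ⊗ₜ[k] R), ← R13map_Ru_central hcent]
    simp only [mul_assoc]
  · rw [lTensor_comul_mul, hΔr, lTensor_comul_Ru h2 husq hgl, R13map_mul, R12map_mul,
      mul_assoc, ← mul_assoc (R12map k A R), ← R13map_Ru_central hcent]
    simp only [mul_assoc]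
  · rw [← mul_assoc, hcomm, mul_assoc, mul_assoc, Ru_central hcent]
  · rw [comm_mul, comm_Ru, mul_assoc, Ru_central hcent, mul_assoc, hRu, mul_one, htri]
  · rw [drinfeld_mul_Ru h2 hcent hne husq hgl, husq]
end

section
/- Let k be a field, A a finite-dimensional associative unital k-algebra, and B ⊆ A a unital subalgebra. Then every simple B-module X is a constituent of some simple A-module: there exist a simple A-module V and B-submodules N ⊆ M ⊆ V (for the restricted B-action) such that M/N is isomorphic to X as a B-module. -/
universe u v

/-- `X` is a subquotient of `W`: it is a quotient of a submodule of `W`. -/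
def IsSubquotient (R W X : Type*) [Ring R] [AddCommGroup W] [Module R W] [AddCommGroup X]
    [Module R X] : Prop :=
  ∃ (S : Submodule R W) (f : S →ₗ[R] X), Function.Surjective f

namespace IsSubquotient

variable {R W Q P X : Type*} [Ring R] [AddCommGroup W] [Module R W] [AddCommGroup X]
  [Module R X] [AddCommGroup Q] [Module R Q] [AddCommGroup P] [Module R P]

/-- A linear map out of a submodule `S` that kills `S ⊓ ker q` descends to the image of `S`
under `q`. -/
theorem of_ker_le (q : W →ₗ[R] Q) (S : Submodule R W) (f : S →ₗ[R] X)
    (hf : Function.Surjective f)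
    (h : LinearMap.ker (q.domRestrict S) ≤ LinearMap.ker f) : IsSubquotient R Q X := by
  let e := (q.domRestrict S).quotKerEquivRange
  refine ⟨LinearMap.range (q.domRestrict S),
    (Submodule.liftQ _ f h).comp e.symm.toLinearMap, ?_⟩
  rw [LinearMap.coe_comp]
  refine Function.Surjective.comp (fun x => ?_) e.symm.surjective
  obtain ⟨s, rfl⟩ := hf x
  exact ⟨Submodule.Quotient.mk s, rfl⟩

theorem of_injective (g : W →ₗ[R] Q) (hg : Function.Injective g) (f : W →ₗ[R] X)
    (hf : Function.Surjective f) : IsSubquotient R Q X := by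
  refine of_ker_le g ⊤ (f.domRestrict ⊤) (fun x => ?_) fun s hs => ?_
  · obtain ⟨w, rfl⟩ := hf x
    exact ⟨⟨w, trivial⟩, rfl⟩
  · have h0 : (s : W) = 0 := hg (by simpa using hs)
    simp [h0]

/-- A simple subquotient of the middle term of an exact sequence is a subquotient of one of the
outer terms. -/
theorem of_exact [IsSimpleModule R X] (i : W →ₗ[R] Q) (q : Q →ₗ[R] P)
    (hiq : Function.Exact i q) (h : IsSubquotient R Q X) :
    IsSubquotient R W X ∨ IsSubquotient R P X := by
  obtain ⟨S, f, hf⟩ := h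
  by_cases hk : LinearMap.ker (q.domRestrict S) ≤ LinearMap.ker f
  · exact Or.inr (of_ker_le q S f hf hk)
  · left
    let j : S.comap i →ₗ[R] S := i.restrict fun _ hw => hw
    refine ⟨S.comap i, f.comp j, (LinearMap.surjective_or_eq_zero _).resolve_right fun h0 => ?_⟩
    refine hk fun s hs => ?_
    obtain ⟨w, hw⟩ := (hiq (s : Q)).1 hs
    have hwS : i w ∈ S := hw ▸ s.2
    have hj : j ⟨w, hwS⟩ = s := Subtype.ext hw
    rw [LinearMap.mem_ker, ← hj]
    exact LinearMap.congr_fun h0 ⟨w, hwS⟩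

theorem exists_quotient_equiv (h : IsSubquotient R W X) :
    ∃ M N : Submodule R W, N ≤ M ∧ Nonempty ((↥M ⧸ (N.comap M.subtype)) ≃ₗ[R] X) := by
  obtain ⟨S, f, hf⟩ := h
  refine ⟨S, (LinearMap.ker f).map S.subtype, Submodule.map_subtype_le _ _, ⟨?_⟩⟩
  exact (Submodule.quotEquivOfEq _ _
    (Submodule.comap_map_eq_of_injective S.injective_subtype _)).trans
    (f.quotKerEquivOfSurjective hf)

end IsSubquotient

/-- A simple subquotient, over a subalgebra `B`, of an `A`-module of finite length is a subquotient
of a simple `A`-module. -/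
theorem IsFiniteLength.exists_isSimpleModule_isSubquotient {k : Type*} [CommRing k] {A : Type u}
    [Ring A] [Algebra k A] (B : Subalgebra k A) {X : Type v} [AddCommGroup X] [Module B X]
    [IsSimpleModule B X] {W : Type u} [AddCommGroup W] [Module A W] (hW : IsFiniteLength A W)
    (h : IsSubquotient B W X) :
    ∃ V : ModuleCat.{u} A, IsSimpleModule A V ∧ IsSubquotient B V X := by
  induction hW with
  | of_subsingleton =>
    obtain ⟨S, f, hf⟩ := h
    have := hf.subsingleton
    exact absurd this (not_subsingleton_iff_nontrivial.2 (IsSimpleModule.nontrivial B X))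
  | @of_simple_quotient M _ _ N hs _ ih =>
    have hiq : Function.Exact (N.subtype.restrictScalars B) (N.mkQ.restrictScalars B) :=
      LinearMap.exact_subtype_mkQ N
    rcases h.of_exact (N.subtype.restrictScalars B) (N.mkQ.restrictScalars B)
      hiq with h | h
    · exact ih h
    · exact ⟨ModuleCat.of A (M ⧸ N), hs, h⟩

/-- Lemma 7.3.7: if `B ⊆ A` are finite-dimensional unital algebras over a
field `k`, then any simple `B`-module is a constituent (a composition factor) of some simple
`A`-module, restricted to `B`. -/
theorem simple_submodule_constituent_of_simple
    (k : Type*) [Field k] (A : Type u) [Ring A] [Algebra k A] [FiniteDimensional k A]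
    (B : Subalgebra k A)
    (X : Type v) [AddCommGroup X] [Module B X] (hX : IsSimpleModule B X) :
    ∃ V : ModuleCat.{u} A, IsSimpleModule A V ∧
      ∃ (M N : Submodule B V), N ≤ M ∧
        Nonempty ((↥M ⧸ (N.comap M.subtype)) ≃ₗ[B] X) := by
  have := IsSimpleModule.nontrivial B X
  obtain ⟨x, hx⟩ := exists_ne (0 : X)
  have hA : IsSubquotient B A X :=
    .of_injective (LinearMap.toSpanSingleton B A 1)
      (fun a b hab => Subtype.ext (by simpa [Subalgebra.smul_def] using hab))
      (LinearMap.toSpanSingleton B X x) (IsSimpleModule.toSpanSingleton_surjective B hx)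
  have : IsArtinianRing A := IsArtinianRing.of_finite k A
  have hfl : IsFiniteLength A A :=
    isFiniteLength_iff_isNoetherian_isArtinian.2 ⟨inferInstance, inferInstance⟩
  obtain ⟨V, hV, hVX⟩ := hfl.exists_isSimpleModule_isSubquotient B hA
  exact ⟨V, hV, hVX.exists_quotient_equiv⟩
end

section
/- Let A be a finite-dimensional Hopf algebra over ℂ with comultiplication Δ, counit ε and antipode S. Then the following are equivalent: (1) for any two simple A-modules V and W, the A-module V⊗W (with action a·(v⊗w) = Σ a₍₁₎v ⊗ a₍₂₎w, where Δ(a) = Σ a₍₁₎⊗a₍₂₎) is semisimple; (2) the Jacobson radical Rad(A) of A is a Hopf ideal, i.e. ε(Rad(A)) = 0, Δ(Rad(A)) ⊆ Rad(A)⊗A + A⊗Rad(A), and S(Rad(A)) ⊆ Rad(A). -/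
open TensorProduct

/-- The Jacobson radical of a ring (the intersection of its maximal left ideals; equivalently,
the intersection of the annihilators of all simple modules). -/
noncomputable def rad (A : Type*) [Ring A] : Ideal A := (⊥ : Ideal A).jacobson

/-- The ring homomorphism `A → End(V ⊗ W)` giving the `A`-module structure on the tensor
product of two `A`-modules over a bialgebra `A`: `a·(v⊗w) = Σ a₍₁₎v ⊗ a₍₂₎w`. -/
noncomputable def tensorRepRingHom (A : Type*) [Ring A] [HopfAlgebra ℂ A]
    (V W : Type*)
    [AddCommGroup V] [Module ℂ V] [Module A V] [IsScalarTower ℂ A V] [SMulCommClass ℂ A V]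
    [AddCommGroup W] [Module ℂ W] [Module A W] [IsScalarTower ℂ A W] [SMulCommClass ℂ A W] :
    A →+* Module.End ℂ (V ⊗[ℂ] W) :=
  ((Module.endTensorEndAlgHom (R := ℂ) (S := ℂ) (A := ℂ) (M := V) (N := W)).comp
    ((Algebra.TensorProduct.map
        (Algebra.lsmul ℂ ℂ V : A →ₐ[ℂ] Module.End ℂ V)
        (Algebra.lsmul ℂ ℂ W : A →ₐ[ℂ] Module.End ℂ W)).comp
      (Bialgebra.comulAlgHom ℂ A))).toRingHom

/-- The `A`-module structure on `V ⊗ W` induced by the comultiplication. -/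
noncomputable def tensorRepModule (A : Type*) [Ring A] [HopfAlgebra ℂ A]
    (V W : Type*)
    [AddCommGroup V] [Module ℂ V] [Module A V] [IsScalarTower ℂ A V] [SMulCommClass ℂ A V]
    [AddCommGroup W] [Module ℂ W] [Module A W] [IsScalarTower ℂ A W] [SMulCommClass ℂ A W] :
    Module A (V ⊗[ℂ] W) :=
  Module.compHom _ (tensorRepRingHom A V W)

/-- The subspace `I ⊗ A + A ⊗ I` of `A ⊗ A`. -/
noncomputable def Ideal.tensorSum (k : Type*) {A : Type*} [Field k] [Ring A] [Algebra k A]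
    (I : Ideal A) : Submodule k (A ⊗[k] A) :=
  LinearMap.range (TensorProduct.map (I.restrictScalars k).subtype (LinearMap.id : A →ₗ[k] A)) ⊔
    LinearMap.range (TensorProduct.map (LinearMap.id : A →ₗ[k] A) (I.restrictScalars k).subtype)

section TensorSum

variable {k A : Type*} [Field k] [Ring A] [Algebra k A] {I : Ideal A}

theorem Ideal.tmul_mem_tensorSum_left {x : A} (hx : x ∈ I) (y : A) :
    x ⊗ₜ[k] y ∈ I.tensorSum k :=
  Submodule.mem_sup_left ⟨(⟨x, hx⟩ : I.restrictScalars k) ⊗ₜ y, by simp⟩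

theorem Ideal.tmul_mem_tensorSum_right (x : A) {y : A} (hy : y ∈ I) :
    x ⊗ₜ[k] y ∈ I.tensorSum k :=
  Submodule.mem_sup_right ⟨x ⊗ₜ (⟨y, hy⟩ : I.restrictScalars k), by simp⟩

theorem Ideal.tensorSum_le {P : Submodule k (A ⊗[k] A)}
    (hl : ∀ x ∈ I, ∀ y, x ⊗ₜ[k] y ∈ P) (hr : ∀ x, ∀ y ∈ I, x ⊗ₜ[k] y ∈ P) :
    I.tensorSum k ≤ P := by
  refine sup_le ?_ ?_ <;> rintro _ ⟨t, rfl⟩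
  · induction t with
    | zero => simp
    | add s t hs ht => simpa using P.add_mem hs ht
    | tmul x y => exact hl x x.2 y
  · induction t with
    | zero => simp
    | add s t hs ht => simpa using P.add_mem hs ht
    | tmul x y => exact hr x y y.2

theorem Ideal.ker_map_mkQ_eq_tensorSum :
    LinearMap.ker (TensorProduct.map (I.mkQ.restrictScalars k) (I.mkQ.restrictScalars k)) =
      I.tensorSum k := by
  have hex : Function.Exact (I.restrictScalars k).subtype (I.mkQ.restrictScalars k) := fun x ↦ by
    simp
  rw [TensorProduct.map_ker hex (Submodule.mkQ_surjective I) hex (Submodule.mkQ_surjective I),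
    sup_comm]
  rfl

end TensorSum

section Antipode

variable (k : Type*) {A : Type*} [Field k] [Ring A] [HopfAlgebra k A]

variable (A) in
/-- The Galois map `x ⊗ y ↦ x₍₁₎ ⊗ x₍₂₎ y` of a Hopf algebra. -/
noncomputable def HopfAlgebra.galoisMap : A ⊗[k] A →ₗ[k] A ⊗[k] A :=
  (LinearMap.mul' k A).lTensor A ∘ₗ (TensorProduct.assoc k A A A).toLinearMap ∘ₗ
    (Coalgebra.comul (R := k)).rTensor A

theorem HopfAlgebra.galoisMap_tmul (x y : A) :
    galoisMap k A (x ⊗ₜ y) = Coalgebra.comul (R := k) x * (1 ⊗ₜ y) := by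
  simp only [galoisMap, LinearMap.comp_apply, LinearMap.rTensor_tmul]
  generalize Coalgebra.comul (R := k) x = t
  induction t with
  | zero => simp
  | add s t hs ht => simp only [TensorProduct.add_tmul, map_add, hs, ht, add_mul]
  | tmul u v => simp

theorem HopfAlgebra.galoisMap_mul_one_tmul (t : A ⊗[k] A) (y : A) :
    galoisMap k A (t * (1 ⊗ₜ y)) = galoisMap k A t * (1 ⊗ₜ y) := by
  induction t with
  | zero => simp
  | add s t hs ht => simp only [map_add, hs, ht, add_mul]
  | tmul u v => simp [galoisMap_tmul, mul_assoc]

theorem HopfAlgebra.galoisMap_antipode_comul (x : A) :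
    galoisMap k A ((antipode k).lTensor A (Coalgebra.comul (R := k) x)) = x ⊗ₜ 1 := by
  have key (t : A ⊗[k] A) : galoisMap k A ((antipode k).lTensor A t) =
      (LinearMap.mul' k A ∘ₗ (antipode k).lTensor A).lTensor A
        (TensorProduct.assoc k A A A ((Coalgebra.comul (R := k)).rTensor A t)) := by
    induction t with
    | zero => simp
    | add s t hs ht => simp only [map_add, hs, ht]
    | tmul u v =>
      simp only [galoisMap, LinearMap.comp_apply, LinearMap.rTensor_tmul, LinearMap.lTensor_tmul,
        LinearEquiv.coe_coe]
      generalize Coalgebra.comul (R := k) u = r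
      induction r with
      | zero => simp
      | add s t hs ht => simp only [TensorProduct.add_tmul, map_add, hs, ht]
      | tmul a b => simp
  rw [key, Coalgebra.coassoc_apply, ← LinearMap.lTensor_comp_apply, LinearMap.comp_assoc,
    mul_antipode_lTensor_comul, LinearMap.lTensor_comp_apply, Coalgebra.lTensor_counit_comul]
  simp

theorem HopfAlgebra.galoisMap_surjective : Function.Surjective (galoisMap k A) := fun t ↦ by
  induction t with
  | zero => exact ⟨0, map_zero _⟩
  | add s t hs ht =>
    obtain ⟨s, rfl⟩ := hs
    obtain ⟨t, rfl⟩ := ht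
    exact ⟨s + t, map_add _ _ _⟩
  | tmul x y =>
    exact ⟨(antipode k).lTensor A (Coalgebra.comul (R := k) x) * (1 ⊗ₜ y), by
      rw [galoisMap_mul_one_tmul, galoisMap_antipode_comul]; simp⟩

variable {k}

/-- A two-sided ideal and coideal of a finite-dimensional Hopf algebra is stable under the
antipode. -/
theorem HopfAlgebra.antipode_mem_of_biideal [FiniteDimensional k A] {I : Ideal A} [I.IsTwoSided]
    (hε : ∀ a ∈ I, Coalgebra.counit (R := k) a = 0)
    (hΔ : ∀ a ∈ I, Coalgebra.comul (R := k) a ∈ I.tensorSum k) {a : A} (ha : a ∈ I) :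
    antipode k a ∈ I := by
  have hmul (y : A) : I.tensorSum k ≤
      (I.tensorSum k).comap (LinearMap.mulRight k ((1 : A) ⊗ₜ[k] y)) := by
    refine Ideal.tensorSum_le (fun u hu v ↦ ?_) (fun u v hv ↦ ?_)
    · simpa using Ideal.tmul_mem_tensorSum_left hu _
    · simpa using Ideal.tmul_mem_tensorSum_right u (I.mul_mem_right y hv)
  have hmaps : I.tensorSum k ≤ (I.tensorSum k).comap (galoisMap k A) := by
    refine Ideal.tensorSum_le (fun u hu v ↦ ?_) (fun u v hv ↦ ?_)
    · rw [Submodule.mem_comap, galoisMap_tmul]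
      exact hmul v (hΔ u hu)
    · rw [Submodule.mem_comap, galoisMap_tmul]
      generalize Coalgebra.comul (R := k) u = t
      induction t with
      | zero => simp
      | add s t hs ht => rw [add_mul]; exact add_mem hs ht
      | tmul b c => simpa using Ideal.tmul_mem_tensorSum_right b (I.mul_mem_left c hv)
  have hinj : Function.Injective (galoisMap k A) :=
    LinearMap.injective_iff_surjective.mpr (galoisMap_surjective k)
  have hmap : (I.tensorSum k).map (galoisMap k A) = I.tensorSum k :=
    Submodule.eq_of_le_of_finrank_eq (Submodule.map_le_iff_le_comap.mpr hmaps)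
      (Submodule.equivMapOfInjective _ hinj _).finrank_eq.symm
  have hmem : (antipode k).lTensor A (Coalgebra.comul (R := k) a) ∈ I.tensorSum k := by
    have h : a ⊗ₜ[k] (1 : A) ∈ (I.tensorSum k).map (galoisMap k A) :=
      hmap.symm ▸ Ideal.tmul_mem_tensorSum_left (k := k) ha 1
    obtain ⟨t, ht, hta⟩ := h
    rwa [← hinj (hta.trans (galoisMap_antipode_comul k a).symm)]
  have hcounit : I.tensorSum k ≤ (I.restrictScalars k).comap
      ((TensorProduct.lid k A).toLinearMap ∘ₗ (Coalgebra.counit (R := k)).rTensor A) := by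
    refine Ideal.tensorSum_le (fun u hu v ↦ ?_) (fun u v hv ↦ ?_)
    · simp [hε u hu]
    · simpa using (I.restrictScalars k).smul_mem _ hv
  have h := hcounit hmem
  rw [Submodule.mem_comap, LinearMap.comp_apply, ← LinearMap.comp_apply (LinearMap.rTensor _ _),
    LinearMap.rTensor_comp_lTensor, ← LinearMap.lTensor_comp_rTensor, LinearMap.comp_apply,
    Coalgebra.rTensor_counit_comul] at h
  simpa using h

end Antipode

section Semisimple

variable {A M : Type*} [Ring A] [AddCommGroup M] [Module A M]

theorem IsArtinianRing.isSemisimpleModule_quotient_jacobson [IsArtinianRing A] :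
    IsSemisimpleModule A (A ⧸ Ring.jacobson A) :=
  (IsArtinian.isSemisimpleModule_iff_jacobson _ _).mpr (Module.jacobson_quotient_jacobson A A)

/-- Over an Artinian ring, a module annihilated by the Jacobson radical is semisimple. -/
theorem IsArtinianRing.isSemisimpleModule_of_jacobson_smul_eq_zero [IsArtinianRing A]
    (h : ∀ a ∈ Ring.jacobson A, ∀ m : M, a • m = 0) : IsSemisimpleModule A M := by
  have := isSemisimpleModule_quotient_jacobson (A := A)
  let f (m : M) : (A ⧸ Ring.jacobson A) →ₗ[A] M :=
    (Ring.jacobson A).liftQ (LinearMap.toSpanSingleton A M m) fun a ha ↦ h a ha m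
  refine isSemisimpleModule_of_isSemisimpleModule_submodule' (p := fun m ↦ LinearMap.range (f m))
    (fun m ↦ IsSemisimpleModule.range _) (eq_top_iff.mpr fun m _ ↦ ?_)
  exact Submodule.mem_iSup_of_mem m ⟨Submodule.Quotient.mk 1, one_smul A m⟩

end Semisimple

section TensorRep

variable {A : Type*} [Ring A] [HopfAlgebra ℂ A]
  {V W : Type*}
  [AddCommGroup V] [Module ℂ V] [Module A V] [IsScalarTower ℂ A V]
  [AddCommGroup W] [Module ℂ W] [Module A W] [IsScalarTower ℂ A W]

variable (A V W) in
/-- The action of `A ⊗ A` on `V ⊗ W`. -/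
noncomputable def tensorAct : A ⊗[ℂ] A →ₐ[ℂ] Module.End ℂ (V ⊗[ℂ] W) :=
  (Module.endTensorEndAlgHom (R := ℂ) (S := ℂ) (A := ℂ) (M := V) (N := W)).comp
    (Algebra.TensorProduct.map
      (Algebra.lsmul ℂ ℂ V : A →ₐ[ℂ] Module.End ℂ V)
      (Algebra.lsmul ℂ ℂ W : A →ₐ[ℂ] Module.End ℂ W))

@[simp]
theorem tensorAct_tmul_tmul (a b : A) (v : V) (w : W) :
    tensorAct A V W (a ⊗ₜ b) (v ⊗ₜ w) = (a • v) ⊗ₜ (b • w) :=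
  rfl

theorem tensorAct_map {V' W' : Type*}
    [AddCommGroup V'] [Module ℂ V'] [Module A V'] [IsScalarTower ℂ A V']
    [AddCommGroup W'] [Module ℂ W'] [Module A W'] [IsScalarTower ℂ A W']
    (f : V →ₗ[A] V') (g : W →ₗ[A] W') (t : A ⊗[ℂ] A) (v : V) (w : W) :
    tensorAct A V' W' t (f v ⊗ₜ g w) =
      TensorProduct.map (f.restrictScalars ℂ) (g.restrictScalars ℂ)
        (tensorAct A V W t (v ⊗ₜ w)) := by
  induction t with
  | zero => simp
  | add s t hs ht => simp [hs, ht]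
  | tmul a b => simp

theorem tensorAct_mk_one (I : Ideal A) (t : A ⊗[ℂ] A) :
    tensorAct A (A ⧸ I) (A ⧸ I) t (I.mkQ 1 ⊗ₜ I.mkQ 1) =
      TensorProduct.map (I.mkQ.restrictScalars ℂ) (I.mkQ.restrictScalars ℂ) t := by
  induction t with
  | zero => simp
  | add s t hs ht => simp only [map_add, LinearMap.add_apply, hs, ht]
  | tmul a b => simp only [tensorAct_tmul_tmul, ← map_smul]; simp

theorem tensorAct_eq_zero_of_mem_tensorSum {I : Ideal A} (hV : ∀ a ∈ I, ∀ v : V, a • v = 0)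
    (hW : ∀ a ∈ I, ∀ w : W, a • w = 0) {t : A ⊗[ℂ] A} (ht : t ∈ I.tensorSum ℂ) :
    tensorAct A V W t = 0 := by
  have hle : I.tensorSum ℂ ≤ LinearMap.ker (tensorAct A V W).toLinearMap := by
    refine Ideal.tensorSum_le (fun x hx y ↦ ?_) (fun x y hy ↦ ?_) <;> rw [LinearMap.mem_ker] <;>
      ext v w
    · simp [hV x hx]
    · simp [hW y hy]
  exact hle ht

end TensorRep

section Chevalley

/-- The Chevalley property with simple modules ranging over the universes `v` and `w`. -/
def ChevalleyProperty.{u, v, w} (A : Type u) [Ring A] [HopfAlgebra ℂ A] : Prop :=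
  ∀ (V : Type v) (W : Type w)
    [AddCommGroup V] [Module ℂ V] [Module A V] [IsScalarTower ℂ A V] [SMulCommClass ℂ A V]
    [AddCommGroup W] [Module ℂ W] [Module A W] [IsScalarTower ℂ A W] [SMulCommClass ℂ A W],
    IsSimpleModule A V → IsSimpleModule A W →
    letI := tensorRepModule A V W
    IsSemisimpleModule A (V ⊗[ℂ] W)

universe u v w

variable {A : Type u} [Ring A] [HopfAlgebra ℂ A]

theorem ChevalleyProperty.tensorAct_eq_zero (h : ChevalleyProperty.{u, v, w} A)
    {V : Type v} {W : Type w}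
    [AddCommGroup V] [Module ℂ V] [Module A V] [IsScalarTower ℂ A V] [SMulCommClass ℂ A V]
    [AddCommGroup W] [Module ℂ W] [Module A W] [IsScalarTower ℂ A W] [SMulCommClass ℂ A W]
    [hV : IsSimpleModule A V] [hW : IsSimpleModule A W] {a : A} (ha : a ∈ Ring.jacobson A) :
    tensorAct A V W (Coalgebra.comul (R := ℂ) a) = 0 := by
  let := tensorRepModule A V W
  have : IsSemisimpleModule A (V ⊗[ℂ] W) := h V W hV hW
  refine LinearMap.ext fun x ↦ ?_
  exact Module.mem_annihilator.mp
    (IsSemisimpleModule.jacobson_le_annihilator A (V ⊗[ℂ] W) ha) x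

theorem small_of_finiteDimensional (N : Type*) [AddCommGroup N] [Module ℂ N]
    [FiniteDimensional ℂ N] : Small.{v} N :=
  small_map (Module.finBasis ℂ N).equivFun.toEquiv

section Shrink

variable (N : Type*) [Small N] [AddCommGroup N] [Module ℂ N] [Module A N]

instance [IsScalarTower ℂ A N] : IsScalarTower ℂ A (Shrink N) where
  smul_assoc c a x := (equivShrink N).symm.injective (by simp)

instance [SMulCommClass ℂ A N] : SMulCommClass ℂ A (Shrink N) where
  smul_comm c a x := (equivShrink N).symm.injective (by simp [smul_comm])

end Shrink

theorem ChevalleyProperty.comul_mem [FiniteDimensional ℂ A]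
    (h : ChevalleyProperty.{u, v, w} A) {a : A} (ha : a ∈ Ring.jacobson A) :
    Coalgebra.comul (R := ℂ) a ∈ (Ring.jacobson A).tensorSum ℂ := by
  have : IsArtinianRing A := .of_finite ℂ A
  have := IsArtinianRing.isSemisimpleModule_quotient_jacobson (A := A)
  set M := A ⧸ Ring.jacobson A
  have hsimple {N N' : Submodule A M} [IsSimpleModule A N] [IsSimpleModule A N']
      {x y : M} (hx : x ∈ N) (hy : y ∈ N') :
      tensorAct A M M (Coalgebra.comul (R := ℂ) a) (x ⊗ₜ y) = 0 := by
    have : FiniteDimensional ℂ (N.restrictScalars ℂ) := inferInstance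
    have : FiniteDimensional ℂ (N'.restrictScalars ℂ) := inferInstance
    have : Small.{v} N := small_of_finiteDimensional (N.restrictScalars ℂ)
    have : Small.{w} N' := small_of_finiteDimensional (N'.restrictScalars ℂ)
    let e := Shrink.linearEquiv.{v} A N
    let e' := Shrink.linearEquiv.{w} A N'
    have : IsSimpleModule A (Shrink.{v} N) := .congr e
    have : IsSimpleModule A (Shrink.{w} N') := .congr e'
    have key := tensorAct_map (N.subtype ∘ₗ e.toLinearMap) (N'.subtype ∘ₗ e'.toLinearMap)
      (Coalgebra.comul (R := ℂ) a) (e.symm ⟨x, hx⟩) (e'.symm ⟨y, hy⟩)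
    rw [h.tensorAct_eq_zero ha] at key
    simpa using key
  have hmem (x : M) : x ∈ sSup {N : Submodule A M | IsSimpleModule A N} := by
    rw [IsSemisimpleModule.sSup_simples_eq_top]; trivial
  have hzero (x y : M) : tensorAct A M M (Coalgebra.comul (R := ℂ) a) (x ⊗ₜ y) = 0 := by
    have hx := hmem x
    have hy := hmem y
    rw [sSup_eq_iSup'] at hx hy
    induction hx using Submodule.iSup_induction' with
    | zero => simp
    | add x x' _ _ hx hx' => rw [TensorProduct.add_tmul, map_add, hx, hx', add_zero]
    | mem N x hx =>
      induction hy using Submodule.iSup_induction' with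
      | zero => simp
      | add y y' _ _ hy hy' => rw [TensorProduct.tmul_add, map_add, hy, hy', add_zero]
      | mem N' y hy =>
        have : IsSimpleModule A N.1 := N.2
        have : IsSimpleModule A N'.1 := N'.2
        exact hsimple hx hy
  rw [← Ideal.ker_map_mkQ_eq_tensorSum, LinearMap.mem_ker, ← tensorAct_mk_one]
  exact hzero _ _

theorem counit_eq_zero_of_mem_jacobson {a : A} (ha : a ∈ Ring.jacobson A) :
    Coalgebra.counit (R := ℂ) a = 0 := by
  let ε : A →+* ℂ := (Bialgebra.counitAlgHom ℂ A).toRingHom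
  have hε : Function.Surjective ε := fun c ↦ ⟨algebraMap ℂ A c, by simp [ε]⟩
  have : RingHomSurjective ε := ⟨hε⟩
  have h := Ring.le_comap_jacobson ε ha
  rwa [IsSemisimpleRing.jacobson_eq_bot, Ideal.mem_comap, Ideal.mem_bot] at h

end Chevalley

/-- Proposition 7.2.2: a finite-dimensional Hopf algebra over `ℂ` has the
Chevalley property (the tensor product of any two simple modules is semisimple) if and only if
its Jacobson radical is a Hopf ideal. -/
theorem chevalley_iff_rad_isHopfIdeal
    (A : Type*) [Ring A] [HopfAlgebra ℂ A] [FiniteDimensional ℂ A] :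
    (∀ (V W : Type*)
        [AddCommGroup V] [Module ℂ V] [Module A V] [IsScalarTower ℂ A V] [SMulCommClass ℂ A V]
        [AddCommGroup W] [Module ℂ W] [Module A W] [IsScalarTower ℂ A W] [SMulCommClass ℂ A W],
        IsSimpleModule A V → IsSimpleModule A W →
        letI := tensorRepModule A V W
        IsSemisimpleModule A (V ⊗[ℂ] W))
    ↔ ((∀ a ∈ rad A, Coalgebra.counit (R := ℂ) a = 0) ∧
       (∀ a ∈ rad A, Coalgebra.comul (R := ℂ) a ∈
          LinearMap.range (TensorProduct.map ((rad A).restrictScalars ℂ).subtype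
            (LinearMap.id : A →ₗ[ℂ] A)) ⊔
          LinearMap.range (TensorProduct.map (LinearMap.id : A →ₗ[ℂ] A)
            ((rad A).restrictScalars ℂ).subtype)) ∧
       (∀ a ∈ rad A, HopfAlgebra.antipode (R := ℂ) a ∈ rad A)) := by
  have hart : IsArtinianRing A := .of_finite ℂ A
  rw [show rad A = Ring.jacobson A from Ideal.jacobson_bot]
  constructor
  · intro h
    replace h : ChevalleyProperty A := h
    have hε : ∀ a ∈ Ring.jacobson A, Coalgebra.counit (R := ℂ) a = 0 :=
      fun a ha ↦ counit_eq_zero_of_mem_jacobson ha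
    exact ⟨hε, fun a ha ↦ h.comul_mem ha, fun a ha ↦
      HopfAlgebra.antipode_mem_of_biideal hε (fun a ha ↦ h.comul_mem ha) ha⟩
  · rintro ⟨-, hΔ, -⟩ V W _ _ _ _ _ _ _ _ _ _ hV hW
    let := tensorRepModule A V W
    refine IsArtinianRing.isSemisimpleModule_of_jacobson_smul_eq_zero fun a ha x ↦ ?_
    exact LinearMap.congr_fun (tensorAct_eq_zero_of_mem_tensorSum
      (fun a ha ↦ Module.mem_annihilator.mp
        (IsSemisimpleModule.jacobson_le_annihilator A V ha))
      (fun a ha ↦ Module.mem_annihilator.mp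
        (IsSemisimpleModule.jacobson_le_annihilator A W ha)) (hΔ a ha)) x
end

section
/- Let d ∈ ℂ be an algebraic integer such that for every positive integer k, both d(d+1)⋯(d+k−1)/k! and d(d−1)⋯(d−k+1)/k! are algebraic integers. Then d is a rational integer, i.e. d ∈ ℤ. -/
open Filter Topology in
/-- The product of the two binomial-type expressions tends to zero. -/
theorem tendsto_prod_add_mul_prod_sub_div_factorial (z : ℂ) :
    Tendsto (fun k : ℕ => ‖(∏ i ∈ Finset.range k, (z + (i : ℂ))) / (Nat.factorial k : ℂ) *
      ((∏ i ∈ Finset.range k, (z - (i : ℂ))) / (Nat.factorial k : ℂ))‖) atTop (𝓝 0) := by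
  set a : ℕ → ℂ := fun k => (∏ i ∈ Finset.range k, (z + (i : ℂ))) / (Nat.factorial k : ℂ) *
      ((∏ i ∈ Finset.range k, (z - (i : ℂ))) / (Nat.factorial k : ℂ)) with ha
  have hrec (k : ℕ) : a (k + 1) * ((k : ℂ) + 1) ^ 2 = a k * (z ^ 2 - (k : ℂ) ^ 2) := by
    have h1 : (Nat.factorial k : ℂ) ≠ 0 := by exact_mod_cast Nat.factorial_ne_zero k
    have h2 : (k : ℂ) + 1 ≠ 0 := by exact_mod_cast Nat.succ_ne_zero k
    simp only [ha, Finset.prod_range_succ, Nat.factorial_succ, Nat.cast_mul, Nat.cast_add,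
      Nat.cast_one]
    field_simp
    ring
  have hnorm (k : ℕ) : ‖a (k + 1)‖ * ((k : ℝ) + 1) ^ 2 ≤ ‖a k‖ * (‖z‖ ^ 2 + (k : ℝ) ^ 2) := by
    have h := congrArg norm (hrec k)
    have h3 : ‖(k : ℂ) + 1‖ = (k : ℝ) + 1 := by
      exact_mod_cast Complex.norm_natCast (k + 1)
    rw [norm_mul (a (k + 1)), norm_mul (a k), norm_pow, h3] at h
    rw [h]
    gcongr
    refine (norm_sub_le _ _).trans_eq ?_
    rw [norm_pow, norm_pow, Complex.norm_natCast]
  obtain ⟨m, hm⟩ := exists_nat_ge (‖z‖ ^ 2)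
  have hbound : ∀ k ≥ m, (k : ℝ) * ‖a k‖ ≤ m * ‖a m‖ := by
    intro k hk
    induction k, hk using Nat.le_induction with
    | base => exact le_rfl
    | succ k hk ih =>
      refine le_trans ?_ ih
      have hk' : (m : ℝ) ≤ k := by exact_mod_cast hk
      have hpos : (0 : ℝ) < (k : ℝ) + 1 := by positivity
      refine le_of_mul_le_mul_right ?_ hpos
      calc ((k + 1 : ℕ) : ℝ) * ‖a (k + 1)‖ * (k + 1) = ‖a (k + 1)‖ * ((k : ℝ) + 1) ^ 2 := by
            push_cast; ring
        _ ≤ ‖a k‖ * (‖z‖ ^ 2 + (k : ℝ) ^ 2) := hnorm k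
        _ ≤ ‖a k‖ * (k + (k : ℝ) ^ 2) := by gcongr; linarith
        _ = k * ‖a k‖ * (k + 1) := by ring
  refine squeeze_zero' (.of_forall fun k => norm_nonneg _) ?_
    (tendsto_const_div_atTop_nhds_zero_nat ((m : ℝ) * ‖a m‖))
  filter_upwards [eventually_ge_atTop m, eventually_gt_atTop 0] with k hk hk0
  rw [le_div_iff₀ (by exact_mod_cast hk0), mul_comm]
  exact hbound k hk

open Filter in
/-- A sequence of algebraic integers of a number field that tends to zero at every infinite place
takes the value zero. -/
theorem exists_eq_zero_of_tendsto_infinitePlace {K : Type*} [Field K] [NumberField K]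
    {x : ℕ → K} (hx : ∀ k, IsIntegral ℤ (x k))
    (h : ∀ w : NumberField.InfinitePlace K, Tendsto (fun k => w (x k)) atTop (nhds 0)) :
    ∃ k, x k = 0 := by
  obtain ⟨k, hk⟩ := (eventually_all.2 fun w => (h w).eventually_lt_const one_pos).exists
  refine ⟨k, by_contra fun hne => ?_⟩
  obtain ⟨w⟩ := (inferInstance : Nonempty (NumberField.InfinitePlace K))
  refine (hk w).not_ge (NumberField.InfinitePlace.one_le_of_lt_one (a := ⟨x k, hx k⟩) ?_
    fun {z} _ => hk z)
  exact fun h0 => hne (congrArg Subtype.val h0)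

/-- Lemma inside Theorem 7.4.5: an algebraic integer `d` such that
`d(d+1)⋯(d+k−1)/k!` and `d(d−1)⋯(d−k+1)/k!` are algebraic integers for all `k ≥ 1`
is a rational integer. -/
theorem isInt_of_binomials_isIntegral (d : ℂ) (hd : IsIntegral ℤ d)
    (hup : ∀ k : ℕ, 0 < k →
      IsIntegral ℤ ((∏ i ∈ Finset.range k, (d + (i : ℂ))) / (Nat.factorial k : ℂ)))
    (hdown : ∀ k : ℕ, 0 < k →
      IsIntegral ℤ ((∏ i ∈ Finset.range k, (d - (i : ℂ))) / (Nat.factorial k : ℂ))) :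
    ∃ n : ℤ, d = (n : ℂ) := by
  let K := IntermediateField.adjoin ℚ {d}
  have : FiniteDimensional ℚ K := IntermediateField.adjoin.finiteDimensional hd.tower_top
  have : NumberField K := { }
  let α : K := IntermediateField.AdjoinSimple.gen ℚ d
  have hα : algebraMap K ℂ α = d := IntermediateField.AdjoinSimple.algebraMap_gen ℚ d
  let x : ℕ → K := fun k => (∏ i ∈ Finset.range k, (α + (i : K))) / (Nat.factorial k : K) *
    ((∏ i ∈ Finset.range k, (α - (i : K))) / (Nat.factorial k : K))
  have hmap (φ : K →+* ℂ) (k : ℕ) : φ (x k) =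
      (∏ i ∈ Finset.range k, (φ α + (i : ℂ))) / (Nat.factorial k : ℂ) *
        ((∏ i ∈ Finset.range k, (φ α - (i : ℂ))) / (Nat.factorial k : ℂ)) := by
    simp [x, map_prod]
  have hint (k : ℕ) : IsIntegral ℤ (x k) := by
    refine (isIntegral_algebraMap_iff (B := ℂ) (algebraMap K ℂ).injective).1 ?_
    rw [hmap, hα]
    rcases k.eq_zero_or_pos with rfl | hk
    · simpa using isIntegral_one
    · exact (hup k hk).mul (hdown k hk)
  obtain ⟨k, hk⟩ := exists_eq_zero_of_tendsto_infinitePlace hint fun w => by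
    simp_rw [← NumberField.InfinitePlace.norm_embedding_eq w, hmap]
    exact tendsto_prod_add_mul_prod_sub_div_factorial _
  have h0 := hmap (algebraMap K ℂ) k
  rw [hk, map_zero, hα, eq_comm, mul_eq_zero, div_eq_zero_iff, div_eq_zero_iff] at h0
  have hfac : (Nat.factorial k : ℂ) ≠ 0 := by exact_mod_cast Nat.factorial_ne_zero k
  simp only [hfac, or_false, Finset.prod_eq_zero_iff] at h0
  obtain ⟨i, -, hi⟩ | ⟨i, -, hi⟩ := h0
  · exact ⟨-i, by push_cast; exact eq_neg_of_add_eq_zero_left hi⟩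
  · exact ⟨i, by push_cast; exact sub_eq_zero.1 hi⟩
end
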